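/- In the permuted-fold hash model with n = k·m (k ≥ 1 an integer) and n ≥ 2, for any x ∈ ℝⁿ the variance (over the random permutation π and the i.i.d. signs g) of the RPS estimator of the squared norm is Var[⟨x̂,x̂⟩_RPS] = (2/m)·((n−m)/(n−1))·∑_{i≠j} x_i² x_j². -/

import Mathlib

open Finset

def rpsSgn {n : ℕ} (s : Fin n → Bool) (i : Fin n) : ℝ := if s i then 1 else -1

lemma rpsSgn_sq {n : ℕ} (s : Fin n → Bool) (i : Fin n) : rpsSgn s i * rpsSgn s i = 1 := by
  unfold rpsSgn; split_ifs <;> norm_num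

def rpsFlip {n : ℕ} (a : Fin n) : (Fin n → Bool) ≃ (Fin n → Bool) where
  toFun s := Function.update s a (!(s a))
  invFun s := Function.update s a (!(s a))
  left_inv s := by simp
  right_inv s := by simp

lemma rpsSgn_flip_self {n : ℕ} (s : Fin n → Bool) (a : Fin n) :
    rpsSgn (rpsFlip a s) a = - rpsSgn s a := by
  unfold rpsSgn rpsFlip; cases h : s a <;> simp [h]

lemma rpsSgn_flip_ne {n : ℕ} (s : Fin n → Bool) (a i : Fin n) (h : i ≠ a) :
    rpsSgn (rpsFlip a s) i = rpsSgn s i := by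
  unfold rpsSgn rpsFlip; simp [h]

lemma rps_sum_zero {n : ℕ} (a : Fin n) (f : (Fin n → Bool) → ℝ)
    (h : ∀ s, f (rpsFlip a s) = - f s) : ∑ s, f s = 0 := by
  have h1 := (rpsFlip a).sum_comp f
  simp only [h, Finset.sum_neg_distrib] at h1
  linarith

lemma rps_second {n : ℕ} (i j : Fin n) :
    ∑ s : Fin n → Bool, rpsSgn s i * rpsSgn s j = if i = j then (2:ℝ)^n else 0 := by
  split_ifs with h
  · subst h; simp [rpsSgn_sq]
  · apply rps_sum_zero i
    intro s
    rw [rpsSgn_flip_self, rpsSgn_flip_ne _ _ _ (Ne.symm h)]; ring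

lemma rps_fourth {n : ℕ} (i j k l : Fin n) (hij : i ≠ j) (hkl : k ≠ l) :
    ∑ s : Fin n → Bool, (rpsSgn s i * rpsSgn s j) * (rpsSgn s k * rpsSgn s l) =
      (2:ℝ)^n * ((if i = k then (if j = l then 1 else 0) else 0)
        + (if i = l then (if j = k then 1 else 0) else 0)) := by
  by_cases hik : i = k
  · subst hik
    have : ∀ s : Fin n → Bool, (rpsSgn s i * rpsSgn s j) * (rpsSgn s i * rpsSgn s l)
        = rpsSgn s j * rpsSgn s l := fun s => by
      linear_combination (rpsSgn s j * rpsSgn s l) * rpsSgn_sq s i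
    simp only [this, rps_second]
    simp [hkl]
  · by_cases hil : i = l
    · subst hil
      have : ∀ s : Fin n → Bool, (rpsSgn s i * rpsSgn s j) * (rpsSgn s k * rpsSgn s i)
          = rpsSgn s j * rpsSgn s k := fun s => by
        linear_combination (rpsSgn s j * rpsSgn s k) * rpsSgn_sq s i
      simp only [this, rps_second]
      simp [hik]
    · simp only [hik, hil, if_false, add_zero, mul_zero]
      apply rps_sum_zero i
      intro s
      rw [rpsSgn_flip_self, rpsSgn_flip_ne _ _ _ (Ne.symm hij), rpsSgn_flip_ne _ _ _ (Ne.symm hik),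
        rpsSgn_flip_ne _ _ _ (Ne.symm hil)]; ring

lemma rps_quad_mean {n : ℕ} (A : Fin n → Fin n → ℝ) (h0 : ∀ i, A i i = 0) :
    ∑ s : Fin n → Bool, ∑ i, ∑ j, A i j * (rpsSgn s i * rpsSgn s j) = 0 := by
  rw [Finset.sum_comm]
  apply Finset.sum_eq_zero
  intro i _
  rw [Finset.sum_comm]
  apply Finset.sum_eq_zero
  intro j _
  rw [← Finset.mul_sum, rps_second]
  split_ifs with h
  · subst h; simp [h0]
  · simp

lemma rps_quad_sq {n : ℕ} (A : Fin n → Fin n → ℝ) (h0 : ∀ i, A i i = 0)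
    (hs : ∀ i j, A i j = A j i) :
    ∑ s : Fin n → Bool, (∑ i, ∑ j, A i j * (rpsSgn s i * rpsSgn s j))^2
      = (2:ℝ)^n * (2 * ∑ i, ∑ j, A i j ^ 2) := by
  have e1 : ∀ s : Fin n → Bool, (∑ i, ∑ j, A i j * (rpsSgn s i * rpsSgn s j))^2
      = ∑ i, ∑ j, ∑ k, ∑ l, A i j * A k l *
        ((rpsSgn s i * rpsSgn s j) * (rpsSgn s k * rpsSgn s l)) := by
    intro s
    rw [sq, Finset.sum_mul]
    refine Finset.sum_congr rfl fun i _ => ?_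
    rw [Finset.sum_mul]
    refine Finset.sum_congr rfl fun j _ => ?_
    rw [Finset.mul_sum]
    refine Finset.sum_congr rfl fun k _ => ?_
    rw [Finset.mul_sum]
    refine Finset.sum_congr rfl fun l _ => ?_
    ring
  simp only [e1]
  rw [Finset.sum_comm, Finset.mul_sum, Finset.mul_sum]
  refine Finset.sum_congr rfl fun i _ => ?_
  rw [Finset.sum_comm, Finset.mul_sum, Finset.mul_sum]
  refine Finset.sum_congr rfl fun j _ => ?_
  have e2 : ∀ k l, ∑ s : Fin n → Bool, A i j * A k l *
        ((rpsSgn s i * rpsSgn s j) * (rpsSgn s k * rpsSgn s l))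
      = (2:ℝ)^n * (A i j * A k l * (if i = k then (if j = l then 1 else 0) else 0))
        + (2:ℝ)^n * (A i j * A k l * (if i = l then (if j = k then 1 else 0) else 0)) := by
    intro k l
    rw [← Finset.mul_sum]
    by_cases hij : i = j
    · subst hij; simp [h0]
    by_cases hkl : k = l
    · subst hkl; simp [h0]
    rw [rps_fourth i j k l hij hkl]; ring
  rw [Finset.sum_comm]
  have e3 : ∀ k, ∑ s : Fin n → Bool, ∑ l, A i j * A k l *
        ((rpsSgn s i * rpsSgn s j) * (rpsSgn s k * rpsSgn s l))
      = (if i = k then (2:ℝ)^n * (A i j * A i j) else 0)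
        + (if j = k then (2:ℝ)^n * (A i j * A j i) else 0) := by
    intro k
    rw [Finset.sum_comm]
    simp only [e2, Finset.sum_add_distrib]
    congr 1
    · split_ifs with h
      · subst h; simp
      · simp
    · split_ifs with h
      · subst h; simp
      · simp
  simp only [e3, Finset.sum_add_distrib]
  simp [← hs i j]
  ring

lemma rps_perm_indep {n : ℕ} (f : Fin n → Fin n → ℝ) (i j i' j' : Fin n) (h : i ≠ j)
    (h' : i' ≠ j') :
    ∑ π : Equiv.Perm (Fin n), f (π i) (π j) = ∑ π : Equiv.Perm (Fin n), f (π i') (π j') := by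
  let τ : Equiv.Perm (Fin n) := Equiv.swap (Equiv.swap i i' j) j' * Equiv.swap i i'
  have h1 : τ i = i' := by
    have : i' ≠ Equiv.swap i i' j := by
      intro hh
      have := congrArg (Equiv.swap i i') hh
      simp at this
      exact h this
    simp only [τ, Equiv.Perm.mul_apply, Equiv.swap_apply_left]
    exact Equiv.swap_apply_of_ne_of_ne this h'
  have h2 : τ j = j' := by simp [τ]
  rw [← Equiv.sum_comp (Equiv.mulRight τ) (fun π : Equiv.Perm (Fin n) => f (π i) (π j))]
  simp [h1, h2]

lemma rps_perm_sum {n : ℕ} (f : Fin n → Fin n → ℝ) (h0 : ∀ a, f a a = 0) (i j : Fin n)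
    (h : i ≠ j) :
    ((n:ℝ) * (n - 1)) * ∑ π : Equiv.Perm (Fin n), f (π i) (π j) =
      (Fintype.card (Equiv.Perm (Fin n)) : ℝ) * ∑ a, ∑ b, f a b := by
  set T := ∑ π : Equiv.Perm (Fin n), f (π i) (π j) with hT
  have key : ∑ a : Fin n, ∑ b : Fin n, ∑ π : Equiv.Perm (Fin n), f (π a) (π b)
      = ((n:ℝ) * (n - 1)) * T := by
    have : ∀ a b : Fin n, ∑ π : Equiv.Perm (Fin n), f (π a) (π b)
        = T - if a = b then T else 0 := by
      intro a b
      split_ifs with hab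
      · subst hab; simp [h0]
      · rw [sub_zero]; exact rps_perm_indep f a b i j hab h
    simp only [this, Finset.sum_sub_distrib]
    simp
    ring
  rw [← key]
  have : ∀ π : Equiv.Perm (Fin n), ∑ a, ∑ b, f (π a) (π b) = ∑ a, ∑ b, f a b := by
    intro π
    rw [← Equiv.sum_comp π (fun a => ∑ b, f a b)]
    refine Finset.sum_congr rfl fun a _ => ?_
    exact Equiv.sum_comp π (fun b => f (π a) b)
  have e : ∑ a : Fin n, ∑ b : Fin n, ∑ π : Equiv.Perm (Fin n), f (π a) (π b)
      = ∑ π : Equiv.Perm (Fin n), ∑ a, ∑ b, f (π a) (π b) := by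
    rw [Finset.sum_comm]
    rw [Finset.sum_comm (s := (Finset.univ : Finset (Equiv.Perm (Fin n))))]
    rw [Finset.sum_comm]
    exact Finset.sum_congr rfl fun a _ => Finset.sum_comm
  rw [e]
  simp only [this]
  simp

lemma rps_fiber (m k r : ℕ) (hr : r < m) :
    ∑ b : Fin (k * m), (if r = (b : ℕ) % m then (1:ℝ) else 0) = k := by
  rw [← finProdFinEquiv.sum_comp, Fintype.sum_prod_type]
  have : ∀ y : Fin m, (y : ℕ) % m = y := fun y => Nat.mod_eq_of_lt y.2
  have h2 : ∀ y : Fin m, (r = (y:ℕ)) ↔ ((⟨r, hr⟩ : Fin m) = y) := fun y => by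
    simp [Fin.ext_iff]
  simp [finProdFinEquiv, this, h2]

/-- Variance of the RPS squared-norm estimator in the permuted-fold hash model with
`n = k·m` (`k ≥ 1`), `n ≥ 2`: the variance over the uniformly random permutation `π`
(giving the hash `h(i) = π(i) mod m`) and the i.i.d. uniform signs `g` equals
`(2/m)·((n−m)/(n−1))·∑_{i≠j} x_i² x_j²`. -/
theorem rps_norm_estimator_variance (n m k : ℕ) (hk : 1 ≤ k) (hnm : n = k * m) (hn : 2 ≤ n)
    (x : Fin n → ℝ) :
    (let sgn : (Fin n → Bool) → Fin n → ℝ := fun s i => if s i then 1 else -1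
     let est : Equiv.Perm (Fin n) → (Fin n → Bool) → ℝ := fun π s =>
       ∑ i, ∑ i', x i * x i' * sgn s i * sgn s i' *
         (if (π i : ℕ) % m = (π i' : ℕ) % m then (1 : ℝ) else 0)
     let N : ℝ := (Fintype.card (Equiv.Perm (Fin n)) : ℝ) * (2 : ℝ) ^ n
     let μ : ℝ := (∑ π : Equiv.Perm (Fin n), ∑ s : Fin n → Bool, est π s) / N
     (∑ π : Equiv.Perm (Fin n), ∑ s : Fin n → Bool, (est π s - μ) ^ 2) / N)
      = ((2 : ℝ) / (m : ℝ)) * (((n : ℝ) - (m : ℝ)) / ((n : ℝ) - 1)) *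
          ∑ i, ∑ j ∈ Finset.univ \ {i}, (x i) ^ 2 * (x j) ^ 2 := by
  have hm : 0 < m := by
    rcases Nat.eq_zero_or_pos m with h | h
    · subst h; omega
    · exact h
  extract_lets sgn est N μ
  have hsgn : sgn = rpsSgn := rfl
  let c : Fin n → Fin n → ℝ := fun a b =>
    if a = b then 0 else if (a : ℕ) % m = (b : ℕ) % m then 1 else 0
  have hc0 : ∀ a, c a a = 0 := fun a => by simp [c]
  have hcs : ∀ a b, c a b = c b a := fun a b => by simp only [c, eq_comm]
  have hcsq : ∀ a b, c a b ^ 2 = c a b := fun a b => by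
    simp only [c]; split_ifs <;> norm_num
  have hcsum : ∑ a, ∑ b, c a b = (n : ℝ) * (k - 1) := by
    have h1 : ∀ a b : Fin n, c a b = (if (a : ℕ) % m = (b : ℕ) % m then (1:ℝ) else 0)
        - if a = b then 1 else 0 := by
      intro a b
      by_cases hab : a = b
      · subst hab; simp [c]
      · simp [c, hab]
    have h2 : ∀ a : Fin n, ∑ b, c a b = (k : ℝ) - 1 := by
      intro a
      simp only [h1, Finset.sum_sub_distrib]
      have h3 : ∑ b : Fin n, (if (a : ℕ) % m = (b : ℕ) % m then (1:ℝ) else 0) = k := by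
        generalize ha : (a : ℕ) % m = r
        have hr : r < m := ha ▸ Nat.mod_lt _ hm
        clear * - hnm hr
        subst hnm
        exact rps_fiber m k r hr
      rw [h3]; simp
    simp [h2]
    ring
  let Q : Equiv.Perm (Fin n) → (Fin n → Bool) → ℝ := fun π s =>
    ∑ i, ∑ j, (x i * x j * c (π i) (π j)) * (rpsSgn s i * rpsSgn s j)
  have hest : ∀ π s, est π s = (∑ i, x i ^ 2) + Q π s := by
    intro π s
    simp only [est, Q, hsgn]
    rw [← Finset.sum_add_distrib]
    refine Finset.sum_congr rfl fun i _ => ?_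
    have : x i ^ 2 = ∑ j, if i = j then x i ^ 2 else 0 := by simp
    rw [this, ← Finset.sum_add_distrib]
    refine Finset.sum_congr rfl fun j _ => ?_
    by_cases hij : i = j
    · subst hij
      simp only [if_true, hc0]
      linear_combination (x i ^ 2) * rpsSgn_sq s i
    · simp only [c, hij, if_false, π.injective.eq_iff]
      ring
  have hN : N ≠ 0 := by
    have : (0:ℝ) < Fintype.card (Equiv.Perm (Fin n)) := by exact_mod_cast Fintype.card_pos
    simp only [N]; positivity
  have hμ : μ = ∑ i, x i ^ 2 := by
    simp only [μ, hest]
    rw [div_eq_iff hN]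
    have : ∀ π, ∑ s, Q π s = 0 := fun π => rps_quad_mean _ (fun i => by simp [hc0])
    simp only [Finset.sum_add_distrib, this]
    simp only [N]
    simp
    ring
  have hsq : ∀ π, ∑ s, (est π s - μ)^2
      = (2:ℝ)^n * (2 * ∑ i, ∑ j, (x i ^ 2 * x j ^ 2) * c (π i) (π j)) := by
    intro π
    simp only [hest, hμ, add_sub_cancel_left]
    have := rps_quad_sq (fun i j => x i * x j * c (π i) (π j)) (fun i => by simp [hc0])
      (fun i j => by rw [hcs]; ring)
    simp only [mul_pow, hcsq] at this
    exact this
  have hn1 : (n : ℝ) - 1 ≠ 0 := by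
    have : (2:ℝ) ≤ n := by exact_mod_cast hn
    linarith
  have hn0 : (n : ℝ) ≠ 0 := by
    have : (2:ℝ) ≤ n := by exact_mod_cast hn
    linarith
  have hm0 : (m : ℝ) ≠ 0 := by exact_mod_cast hm.ne'
  have hperm : ∀ i j : Fin n, i ≠ j → ∑ π : Equiv.Perm (Fin n), c (π i) (π j)
      = (Fintype.card (Equiv.Perm (Fin n)) : ℝ) * ((k - 1) / (n - 1)) := by
    intro i j hij
    have := rps_perm_sum c hc0 i j hij
    rw [hcsum] at this
    field_simp
    apply mul_left_cancel₀ hn0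
    linear_combination this
  have htot : ∑ π : Equiv.Perm (Fin n), ∑ i, ∑ j, (x i ^ 2 * x j ^ 2) * c (π i) (π j)
      = (Fintype.card (Equiv.Perm (Fin n)) : ℝ) * ((k - 1) / (n - 1)) *
        ∑ i, ∑ j ∈ Finset.univ \ {i}, (x i) ^ 2 * (x j) ^ 2 := by
    rw [Finset.sum_comm, Finset.mul_sum]
    refine Finset.sum_congr rfl fun i _ => ?_
    rw [Finset.sum_comm, Finset.mul_sum]
    rw [← Finset.sum_subset (Finset.subset_univ (Finset.univ \ {i}))]
    · refine Finset.sum_congr rfl fun j hj => ?_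
      have hij : i ≠ j := by
        simp at hj; exact fun h => hj h.symm
      rw [← Finset.mul_sum, hperm i j hij]; ring
    · intro j _ hj
      have : j = i := by simpa using hj
      subst this
      simp [hc0]
  simp only [hsq]
  rw [← Finset.mul_sum, ← Finset.mul_sum, htot, div_eq_iff hN]
  have hnr : (n : ℝ) = k * m := by exact_mod_cast hnm
  have hkm : 2 / (m:ℝ) * (((n:ℝ) - m) / (n - 1)) = 2 * ((k - 1) / (n - 1)) := by
    field_simp
    rw [hnr]; ring
  rw [hkm]
  simp only [N]
  ring
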